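/- arXiv:1409.6614 — 2 statements merged into one kernel-verified Lean document; each statement's English description precedes it below -/
import Mathlib

section
/- For every integer n ≥ 2, the number of admissible tilings of the positions 1,…,n equals P(n+5), where P is the Padovan sequence. (Equivalently: the number of summands in the expansion of the Kauffman bracket of the 2-bridge Chebyshev diagram T(3,b), which are in bijection with admissible tilings of length n = b-1, is the Padovan number P(b+4), an offset of OEIS A000931.) -/
/-!
Call a *tail* a word in `VH` and `C`, optionally followed by one `V`: this is what may follow the
initial block of a tiling. A tail of total size `m + 3` starts with `C` or `VH`, and what follows is
a tail of size `m + 1` or `m`, which is the Padovan recursion. As there is exactly one tail of each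
size `0`, `1`, `2`, there are `P (m + 5)` tails of size `m`.

The initial blocks `S₂` and `S₁H` have the same sizes as `C` and `VH`. Renaming them accordingly
turns an admissible tiling into a tail of the same size that starts with `C` or `VH`; the only tails
not of this form are `[]` and `[V]`, whose sizes are less than `2`.
-/

/-- The types of tiles appearing in the geometric interpretation of the Kauffman bracket
expansion of the 2-bridge Chebyshev diagrams `T(3,b)`. -/
inductive Block : Type
  | S2 | S1H | VH | C | V
  deriving DecidableEq

/-- The number of positions covered by each block. -/
def Block.size : Block → ℕ
  | .S2 => 2
  | .S1H => 3
  | .VH => 3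
  | .C => 2
  | .V => 1

/-- An admissible tiling: first one initial block (`S₂` or `S₁H`), then a possibly empty
sequence of middle blocks (`VH` or `C`), then optionally one final block `V`. -/
def IsAdmissible (l : List Block) : Prop :=
  ∃ (b₀ : Block) (mid tl : List Block),
    l = b₀ :: (mid ++ tl) ∧
    (b₀ = Block.S2 ∨ b₀ = Block.S1H) ∧
    (∀ b ∈ mid, b = Block.VH ∨ b = Block.C) ∧
    (tl = [] ∨ tl = [Block.V])

/-- The Padovan sequence, OEIS A000931: `P 0 = 1`, `P 1 = P 2 = 0`,
`P (m+3) = P (m+1) + P m`. -/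
def padovan : ℕ → ℕ
  | 0 => 1
  | 1 => 0
  | 2 => 0
  | m + 3 => padovan (m + 1) + padovan m

theorem encard_image_cons_union_image_cons {α : Type*} {a b : α} (hab : a ≠ b)
    (s t : Set (List α)) :
    (List.cons a '' s ∪ List.cons b '' t).encard = s.encard + t.encard := by
  have hdisj : Disjoint (List.cons a '' s) (List.cons b '' t) :=
    Set.disjoint_image_image fun _ _ _ _ h => hab (List.cons.inj h).1
  rw [Set.encard_union_eq hdisj, List.cons_injective.encard_image,
    List.cons_injective.encard_image]

theorem modifyHead_involutive {α : Type*} {f : α → α} (hf : Function.Involutive f) :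
    Function.Involutive (List.modifyHead f) := by
  intro l
  rw [List.modifyHead_modifyHead, hf.comp_self, List.modifyHead_id, id]

theorem map_modifyHead_of_forall_eq {α β : Type*} {f : α → α} {g : α → β}
    (hfg : ∀ a, g (f a) = g a) (l : List α) : (l.modifyHead f).map g = l.map g := by
  cases l <;> simp [hfg]

/-- A tail: what may follow the initial block of an admissible tiling, that is, a sequence of middle
blocks (`VH` or `C`), then optionally one final block `V`. -/
def IsTail (l : List Block) : Prop :=
  ∃ mid tl : List Block, l = mid ++ tl ∧
    (∀ b ∈ mid, b = Block.VH ∨ b = Block.C) ∧ (tl = [] ∨ tl = [Block.V])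

theorem isTail_nil : IsTail [] := ⟨[], [], by simp⟩

theorem isTail_cons_iff {b : Block} {l : List Block} :
    IsTail (b :: l) ↔ (b = Block.V ∧ l = []) ∨ ((b = Block.VH ∨ b = Block.C) ∧ IsTail l) := by
  constructor
  · rintro ⟨_ | ⟨c, mid⟩, tl, h, hmid, htl⟩
    · obtain rfl | rfl := htl
      · simp at h
      · exact Or.inl (by simpa using h)
    · obtain ⟨rfl, rfl⟩ := List.cons.inj h
      obtain ⟨hb, hmid⟩ := List.forall_mem_cons.1 hmid
      exact Or.inr ⟨hb, mid, tl, rfl, hmid, htl⟩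
  · rintro (⟨rfl, rfl⟩ | ⟨hb, mid, tl, rfl, hmid, htl⟩)
    · exact ⟨[], [Block.V], by simp⟩
    · exact ⟨b :: mid, tl, rfl, List.forall_mem_cons.2 ⟨hb, hmid⟩, htl⟩

theorem isAdmissible_cons_iff {b : Block} {l : List Block} :
    IsAdmissible (b :: l) ↔ (b = Block.S2 ∨ b = Block.S1H) ∧ IsTail l := by
  constructor
  · rintro ⟨_, mid, tl, h, hb, hmid, htl⟩
    obtain ⟨rfl, rfl⟩ := List.cons.inj h
    exact ⟨hb, mid, tl, rfl, hmid, htl⟩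
  · rintro ⟨hb, mid, tl, rfl, hmid, htl⟩
    exact ⟨b, mid, tl, rfl, hb, hmid, htl⟩

/-- The set of tails covering exactly `m` positions. -/
def tailsOfSize (m : ℕ) : Set (List Block) :=
  {l | IsTail l ∧ (l.map Block.size).sum = m}

theorem nil_mem_tailsOfSize_iff {m : ℕ} : [] ∈ tailsOfSize m ↔ m = 0 := by
  simp [tailsOfSize, isTail_nil, eq_comm]

theorem cons_mem_tailsOfSize_iff {b : Block} {l : List Block} {m : ℕ} :
    b :: l ∈ tailsOfSize m ↔
      (b = Block.V ∧ l = [] ∧ m = 1) ∨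
      (b = Block.C ∧ ∃ k, m = k + 2 ∧ l ∈ tailsOfSize k) ∨
      (b = Block.VH ∧ ∃ k, m = k + 3 ∧ l ∈ tailsOfSize k) := by
  simp only [tailsOfSize, Set.mem_ofPred_eq, isTail_cons_iff, List.map_cons, List.sum_cons]
  cases b <;> grind [Block.size]

theorem tailsOfSize_zero : tailsOfSize 0 = {[]} := by
  ext (_ | ⟨b, l⟩) <;> simp [nil_mem_tailsOfSize_iff, cons_mem_tailsOfSize_iff]

theorem tailsOfSize_one : tailsOfSize 1 = {[Block.V]} := by
  ext (_ | ⟨b, l⟩) <;> simp [nil_mem_tailsOfSize_iff, cons_mem_tailsOfSize_iff]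

theorem tailsOfSize_two : tailsOfSize 2 = {[Block.C]} := by
  ext (_ | ⟨b, l⟩) <;>
    simp [nil_mem_tailsOfSize_iff, cons_mem_tailsOfSize_iff, tailsOfSize_zero]

theorem tailsOfSize_add_three (m : ℕ) :
    tailsOfSize (m + 3) =
      List.cons Block.C '' tailsOfSize (m + 1) ∪ List.cons Block.VH '' tailsOfSize m := by
  ext (_ | ⟨b, l⟩)
  · simp [nil_mem_tailsOfSize_iff]
  · simp [cons_mem_tailsOfSize_iff, eq_comm, and_comm]

theorem encard_tailsOfSize : ∀ m, (tailsOfSize m).encard = padovan (m + 5)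
  | 0 => by simp [tailsOfSize_zero, padovan]
  | 1 => by simp [tailsOfSize_one, padovan]
  | 2 => by simp [tailsOfSize_two, padovan]
  | m + 3 => by
    rw [tailsOfSize_add_three, encard_image_cons_union_image_cons (by decide),
      encard_tailsOfSize (m + 1), encard_tailsOfSize m, ← Nat.cast_add]
    rfl

/-- The exchange of each initial block (`S₂`, `S₁H`) with the middle block of the same size
(`C`, `VH`). It is defined on all blocks so as to be an involution. -/
def Block.swapInitial : Block → Block
  | .S2 => .C
  | .S1H => .VH
  | .VH => .S1H
  | .C => .S2
  | .V => .V

theorem Block.swapInitial_involutive : Function.Involutive Block.swapInitial := by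
  rintro (_ | _) <;> rfl

theorem Block.size_swapInitial (b : Block) : b.swapInitial.size = b.size := by
  cases b <;> rfl

theorem isTail_modifyHead_swapInitial_iff {l : List Block} (hnil : l ≠ []) (hV : l ≠ [Block.V]) :
    IsTail (l.modifyHead Block.swapInitial) ↔ IsAdmissible l := by
  obtain ⟨b, l, rfl⟩ := List.exists_cons_of_ne_nil hnil
  rw [List.modifyHead_cons, isTail_cons_iff, isAdmissible_cons_iff]
  cases b <;> simp_all [Block.swapInitial]

theorem modifyHead_swapInitial_mem_tailsOfSize_iff {n : ℕ} (hn : 2 ≤ n) {l : List Block} :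
    l.modifyHead Block.swapInitial ∈ tailsOfSize n ↔
      IsAdmissible l ∧ (l.map Block.size).sum = n := by
  rw [tailsOfSize, Set.mem_ofPred_eq, map_modifyHead_of_forall_eq Block.size_swapInitial]
  refine and_congr_left fun hsize => isTail_modifyHead_swapInitial_iff ?_ ?_
  · rintro rfl
    grind
  · rintro rfl
    grind [Block.size]

/-- For every `n ≥ 2`, the number of admissible tilings of the positions `1,…,n`
equals the Padovan number `P (n+5)`. -/
theorem card_admissible_tilings (n : ℕ) (hn : 2 ≤ n) :
    Nat.card {l : List Block // IsAdmissible l ∧ (l.map Block.size).sum = n}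
      = padovan (n + 5) := by
  let e : Equiv.Perm (List Block) :=
    (modifyHead_involutive Block.swapInitial_involutive).toPerm
  calc Nat.card {l : List Block // IsAdmissible l ∧ (l.map Block.size).sum = n}
      = (tailsOfSize n).ncard := Nat.card_congr <|
        e.subtypeEquiv fun _ => (modifyHead_swapInitial_mem_tailsOfSize_iff hn).symm
    _ = padovan (n + 5) := by rw [Set.ncard, encard_tailsOfSize, ENat.toNat_natCast]
end

section
/- For every integer b ≥ 3 and every sign sequence ε ∈ {1,-1}^(b-1), the Kauffman bracket polynomial F_b(ε₁,…,ε_{b-1}) equals the sum, over all admissible tilings of the positions 1,…,b-1, of the value of the tiling. (This is the expansion theorem for Kauffman bracket polynomials of the 2-bridge Chebyshev diagrams T(3,b); it has far fewer terms than the 2^(b-1) terms of the skein-relation expansion.) -/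
/-!
With `a_p = a(ε_p)` and `h_p = a(-ε_{p+1})·f₂(-ε_p)` the recurrence for `F` reads
`F_{p+2} = a_{p+1} F_{p+1} + h_p F_p`, so `F` splits like a continuant:
`F_{n+3} = F₃ · K(3,…,n+2) + h₂ F₂ · K(4,…,n+2)`. The coefficients `F₃` and `h₂ F₂` are the values
of the initial blocks `S₂` and `S₁H`. Expanding the first term of
`K(p,…,q) = a_p K(p+1,…,q) + h_p K(p+2,…,q)` once more gives
`K(p,…,q) = (a_p a_{p+1} + h_p) K(p+2,…,q) + a_p h_{p+1} K(p+3,…,q)`,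
whose coefficients are the values of `C` and `VH`, while `K(q) = a_q` is the value of the final
block `V`. So `K` is the sum over all continuations of the tiling.
-/

open LaurentPolynomial

noncomputable section

/-- The ring `ℤ[A, A⁻¹]` of Laurent polynomials over `ℤ`; the variable `A` is
`LaurentPolynomial.T 1`, and `A^n = T n` for `n : ℤ`. -/
abbrev KR : Type := LaurentPolynomial ℤ

/-- `a ε = A^ε`. -/
def Ca (ε : ℤ) : KR := T ε

/-- `f₂ ε = -A^(-3ε)`, the Kauffman bracket of `T(3,2)` with crossing sign `ε`. -/
def Cf₂ (ε : ℤ) : KR := -T (-3 * ε)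

/-- The Kauffman bracket polynomial of the Chebyshev billiard table diagram `T(3,b)`
with crossing signs `e 1, …, e (b-1)`. -/
def F : ℕ → (ℕ → ℤ) → KR
  | 0, _ => 1
  | 1, _ => 1
  | 2, e => Cf₂ (e 1)
  | m + 3, e =>
      Ca (e (m + 2)) * F (m + 2) e + Ca (-e (m + 2)) * Cf₂ (-e (m + 1)) * F (m + 1) e

/-- The value of a block covering consecutive positions starting at position `p`,
computed from the signs `e p, e (p+1), …` at the positions it covers.
`S₂` has value `F₃(α,β)`; `S₁H` has value `f₂(α)·f₂(-β)·a(-γ)`;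
`VH` has value `a(α)·f₂(-β)·a(-γ)`; `C` has value `a(α)·a(β) + f₂(-α)·a(-β)`;
`V` has value `a(α)`. -/
def blockVal (e : ℕ → ℤ) (p : ℕ) : Block → KR
  | .S2 => Ca (e (p + 1)) * Cf₂ (e p) + Ca (-e (p + 1)) * Cf₂ (-e p)
  | .S1H => Cf₂ (e p) * Cf₂ (-e (p + 1)) * Ca (-e (p + 2))
  | .VH => Ca (e p) * Cf₂ (-e (p + 1)) * Ca (-e (p + 2))
  | .C => Ca (e p) * Ca (e (p + 1)) + Cf₂ (-e p) * Ca (-e (p + 1))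
  | .V => Ca (e p)

/-- The value of a tiling starting at position `p`: the product of the values of its
blocks, each evaluated at the consecutive positions it covers. -/
def tilingVal (e : ℕ → ℤ) : ℕ → List Block → KR
  | _, [] => 1
  | p, b :: rest => blockVal e p b * tilingVal e (p + b.size) rest

section Continuant

variable {R : Type*} [CommSemiring R]

/-- The continuant with weight `a i` on the single position `i` and `h i` on the pair of positions
`i, i + 1`: `continuant a h p k` is the continuant on the `k - 1` positions `p, …, p + k - 2`. The
length is shifted by one to include the value `0` on `-1` positions. -/
def continuant (a h : ℕ → R) : ℕ → ℕ → R
  | _, 0 => 0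
  | _, 1 => 1
  | p, k + 2 => a p * continuant a h (p + 1) (k + 1) + h p * continuant a h (p + 2) k

lemma continuant_add_three (a h : ℕ → R) (p k : ℕ) :
    continuant a h p (k + 3) =
      (a p * a (p + 1) + h p) * continuant a h (p + 2) (k + 1) +
        a p * h (p + 1) * continuant a h (p + 3) k := by
  simp only [continuant]
  ring

lemma eq_continuant_of_recurrence {u a h : ℕ → R} {p : ℕ}
    (hu : ∀ i ≥ p, u (i + 2) = a (i + 1) * u (i + 1) + h i * u i) (k : ℕ) :
    u (p + k + 1) =
      u (p + 1) * continuant a h (p + 1) (k + 1) + h p * u p * continuant a h (p + 2) k := by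
  induction k generalizing p with
  | zero => simp [continuant]
  | succ k ih =>
    calc u (p + (k + 1) + 1)
        = u (p + 1 + k + 1) := by rw [Nat.add_right_comm p 1 k, Nat.add_assoc p k 1]
      _ = u (p + 2) * continuant a h (p + 2) (k + 1) +
            h (p + 1) * u (p + 1) * continuant a h (p + 3) k :=
          ih fun i hi => hu i (Nat.le_of_succ_le hi)
      _ = u (p + 1) * continuant a h (p + 1) (k + 2) +
            h p * u p * continuant a h (p + 2) (k + 1) := by
          rw [hu p le_rfl, continuant]
          ring

end Continuant

/-- The weight `a(-ε_{p+1})·f₂(-ε_p)` of the pair of positions `p, p + 1`, which is the coefficient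
of `F_p` in the recurrence for `F_{p+2}`. -/
def pairWeight (e : ℕ → ℤ) (p : ℕ) : KR := Ca (-e (p + 1)) * Cf₂ (-e p)

lemma F_add_two (e : ℕ → ℤ) {p : ℕ} (hp : 1 ≤ p) :
    F (p + 2) e = Ca (e (p + 1)) * F (p + 1) e + pairWeight e p * F p e := by
  obtain ⟨m, rfl⟩ := Nat.exists_eq_add_of_le' hp
  rfl

lemma F_add_three (e : ℕ → ℤ) (n : ℕ) :
    F (n + 3) e =
      F 3 e * continuant (Ca ∘ e) (pairWeight e) 3 (n + 1) +
        pairWeight e 2 * F 2 e * continuant (Ca ∘ e) (pairWeight e) 4 n := by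
  have hrec : ∀ i ≥ 2, F (i + 2) e = (Ca ∘ e) (i + 1) * F (i + 1) e + pairWeight e i * F i e :=
    fun i hi => F_add_two e (one_le_two.trans hi)
  rw [show n + 3 = 2 + n + 1 by lia]
  exact eq_continuant_of_recurrence (u := (F · e)) hrec n

lemma blockVal_one_S2 (e : ℕ → ℤ) : blockVal e 1 .S2 = F 3 e := by
  simp [blockVal, F]

lemma blockVal_one_S1H (e : ℕ → ℤ) : blockVal e 1 .S1H = pairWeight e 2 * F 2 e := by
  simp only [blockVal, pairWeight, F]
  ring

lemma blockVal_C (e : ℕ → ℤ) (p : ℕ) :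
    blockVal e p .C = Ca (e p) * Ca (e (p + 1)) + pairWeight e p := by
  simp only [blockVal, pairWeight, mul_comm]

lemma blockVal_VH (e : ℕ → ℤ) (p : ℕ) :
    blockVal e p .VH = Ca (e p) * pairWeight e (p + 1) := by
  simp only [blockVal, pairWeight]
  ring

/-- A list of blocks that may follow the initial block of an admissible tiling. -/
inductive IsContinuation : List Block → Prop
  | nil : IsContinuation []
  | V : IsContinuation [.V]
  | cons_C {l : List Block} : IsContinuation l → IsContinuation (.C :: l)
  | cons_VH {l : List Block} : IsContinuation l → IsContinuation (.VH :: l)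

lemma isContinuation_iff {l : List Block} :
    IsContinuation l ↔ ∃ mid tl : List Block, l = mid ++ tl ∧
      (∀ b ∈ mid, b = .VH ∨ b = .C) ∧ (tl = [] ∨ tl = [.V]) := by
  constructor
  · intro h
    induction h with
    | nil => exact ⟨[], [], by simp⟩
    | V => exact ⟨[], [.V], by simp⟩
    | cons_C _ ih =>
      obtain ⟨mid, tl, rfl, hmid, htl⟩ := ih
      exact ⟨.C :: mid, tl, rfl, List.forall_mem_cons.2 ⟨.inr rfl, hmid⟩, htl⟩
    | cons_VH _ ih =>
      obtain ⟨mid, tl, rfl, hmid, htl⟩ := ih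
      exact ⟨.VH :: mid, tl, rfl, List.forall_mem_cons.2 ⟨.inl rfl, hmid⟩, htl⟩
  · rintro ⟨mid, tl, rfl, hmid, htl⟩
    induction mid with
    | nil => rcases htl with rfl | rfl <;> constructor
    | cons b mid ih =>
      obtain ⟨hb, hrest⟩ := List.forall_mem_cons.1 hmid
      rcases hb with rfl | rfl
      · exact (ih hrest).cons_VH
      · exact (ih hrest).cons_C

lemma isAdmissible_iff {l : List Block} :
    IsAdmissible l ↔ ∃ t, IsContinuation t ∧ (.S2 :: t = l ∨ .S1H :: t = l) := by
  simp only [isContinuation_iff]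
  constructor
  · rintro ⟨b, mid, tl, rfl, rfl | rfl, h⟩
    · exact ⟨_, ⟨mid, tl, rfl, h⟩, .inl rfl⟩
    · exact ⟨_, ⟨mid, tl, rfl, h⟩, .inr rfl⟩
  · rintro ⟨_, ⟨mid, tl, rfl, h⟩, rfl | rfl⟩
    · exact ⟨_, mid, tl, rfl, .inl rfl, h⟩
    · exact ⟨_, mid, tl, rfl, .inr rfl, h⟩

/-- The continuations covering `k - 1` positions. The length is shifted by one, as for
`continuant`, so that there are none for `k = 0`. -/
def continuations : ℕ → Finset (List Block)
  | 0 => ∅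
  | 1 => {[]}
  | 2 => {[.V]}
  | k + 3 => (continuations (k + 1)).image (.cons .C) ∪ (continuations k).image (.cons .VH)

lemma IsContinuation.mem_continuations {l : List Block} (h : IsContinuation l) :
    l ∈ continuations ((l.map Block.size).sum + 1) := by
  induction h with
  | nil | V => simp [continuations, Block.size]
  | @cons_C l _ ih =>
    have hsize : ((Block.C :: l).map Block.size).sum + 1 = (l.map Block.size).sum + 3 := by
      grind [Block.size]
    rw [hsize, continuations]
    exact Finset.mem_union_left _ (Finset.mem_image_of_mem _ ih)
  | @cons_VH l _ ih =>
    have hsize : ((Block.VH :: l).map Block.size).sum + 1 = (l.map Block.size).sum + 1 + 3 := by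
      grind [Block.size]
    rw [hsize, continuations]
    exact Finset.mem_union_right _ (Finset.mem_image_of_mem _ ih)

lemma mem_continuations {k : ℕ} {l : List Block} :
    l ∈ continuations k ↔ IsContinuation l ∧ (l.map Block.size).sum + 1 = k := by
  refine ⟨fun hl => ?_, fun ⟨hl, hk⟩ => hk ▸ hl.mem_continuations⟩
  fun_induction continuations k generalizing l with
  | case1 => simp at hl
  | case2 =>
    obtain rfl := Finset.mem_singleton.1 hl
    exact ⟨.nil, rfl⟩
  | case3 =>
    obtain rfl := Finset.mem_singleton.1 hl
    exact ⟨.V, rfl⟩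
  | case4 k ihC ihVH =>
    simp only [Finset.mem_union, Finset.mem_image] at hl
    rcases hl with ⟨t, ht, rfl⟩ | ⟨t, ht, rfl⟩
    · obtain ⟨hcont, hsize⟩ := ihC ht
      exact ⟨hcont.cons_C, by grind [Block.size]⟩
    · obtain ⟨hcont, hsize⟩ := ihVH ht
      exact ⟨hcont.cons_VH, by grind [Block.size]⟩

lemma sum_tilingVal_cons_union (e : ℕ → ℤ) (p : ℕ) {b c : Block} (hbc : b ≠ c)
    (s t : Finset (List Block)) :
    ∑ l ∈ s.image (.cons b) ∪ t.image (.cons c), tilingVal e p l =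
      blockVal e p b * ∑ l ∈ s, tilingVal e (p + b.size) l +
        blockVal e p c * ∑ l ∈ t, tilingVal e (p + c.size) l := by
  have hdisj : Disjoint (s.image (List.cons b)) (t.image (List.cons c)) := by
    simp [Finset.disjoint_left, hbc.symm]
  rw [Finset.sum_union hdisj, Finset.sum_image List.cons_injective.injOn,
    Finset.sum_image List.cons_injective.injOn]
  simp only [tilingVal, Finset.mul_sum]

lemma sum_continuations (e : ℕ → ℤ) (p k : ℕ) :
    ∑ l ∈ continuations k, tilingVal e p l = continuant (Ca ∘ e) (pairWeight e) p k := by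
  fun_induction continuations k generalizing p with
  | case1 | case2 | case3 => simp [tilingVal, blockVal, continuant]
  | case4 k ihC ihVH =>
    rw [sum_tilingVal_cons_union e p (by decide), ihC, ihVH, blockVal_C, blockVal_VH,
      continuant_add_three]
    rfl

/-- The admissible tilings of the positions `1, …, n + 2`. -/
def admissibleTilings (n : ℕ) : Finset (List Block) :=
  (continuations (n + 1)).image (.cons .S2) ∪ (continuations n).image (.cons .S1H)

lemma mem_admissibleTilings {n : ℕ} {l : List Block} :
    l ∈ admissibleTilings n ↔ IsAdmissible l ∧ (l.map Block.size).sum = n + 2 := by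
  simp only [admissibleTilings, Finset.mem_union, Finset.mem_image, mem_continuations,
    isAdmissible_iff]
  constructor
  · rintro (⟨t, ⟨ht, hsize⟩, rfl⟩ | ⟨t, ⟨ht, hsize⟩, rfl⟩)
    · exact ⟨⟨t, ht, .inl rfl⟩, by grind [Block.size]⟩
    · exact ⟨⟨t, ht, .inr rfl⟩, by grind [Block.size]⟩
  · rintro ⟨⟨t, ht, rfl | rfl⟩, hsize⟩
    · exact .inl ⟨t, ⟨ht, by grind [Block.size]⟩, rfl⟩
    · exact .inr ⟨t, ⟨ht, by grind [Block.size]⟩, rfl⟩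

lemma sum_admissibleTilings (e : ℕ → ℤ) (n : ℕ) :
    ∑ l ∈ admissibleTilings n, tilingVal e 1 l = F (n + 3) e := by
  rw [admissibleTilings, sum_tilingVal_cons_union e 1 (by decide), sum_continuations,
    sum_continuations, blockVal_one_S2, blockVal_one_S1H, F_add_three e n]
  rfl

theorem kauffman_bracket_two_bridge_tiling_expansion_general
    (b : ℕ) (hb : 3 ≤ b) (e : ℕ → ℤ) :
    F b e =
      ∑ᶠ l ∈ {l : List Block | IsAdmissible l ∧ (l.map Block.size).sum = b - 1},
        tilingVal e 1 l := by
  obtain ⟨n, rfl⟩ := Nat.exists_eq_add_of_le' hb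
  have htilings : {l : List Block | IsAdmissible l ∧ (l.map Block.size).sum = n + 3 - 1} =
      admissibleTilings n :=
    Set.ext fun _ => mem_admissibleTilings.symm
  rw [htilings, finsum_mem_coe_finset, sum_admissibleTilings]

/-- Expansion theorem for the Kauffman bracket polynomials of 2-bridge Chebyshev
diagrams `T(3,b)`: for every `b ≥ 3` and all crossing signs, `F_b` equals the sum over
all admissible tilings of the positions `1,…,b-1` of the value of the tiling. -/
theorem kauffman_bracket_two_bridge_tiling_expansion
    (b : ℕ) (hb : 3 ≤ b) (e : ℕ → ℤ) (he : ∀ i, e i = 1 ∨ e i = -1) :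
    F b e =
      ∑ᶠ l ∈ {l : List Block | IsAdmissible l ∧ (l.map Block.size).sum = b - 1},
        tilingVal e 1 l :=
  kauffman_bracket_two_bridge_tiling_expansion_general b hb e

end
end
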